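/- Let λ ⊢ n and embed S_{n−1} into S_n as the permutations fixing the last element n. Then for every g ∈ S_{n−1}, φ_λ(ι(g)) = Σ_{γ ⊢ n−1, γ ≺ λ} c(λ,γ) · φ_γ(g), where ι : S_{n−1} → S_n is the embedding. (The restriction to S_{n−1} of the representation induced from the identity representation of the Young subgroup H(λ) is the direct sum, over diagrams γ immediately preceding λ, of c(λ,γ) copies of the representation of S_{n−1} induced from the identity representation of H(γ).) -/

import Mathlib

open scoped Classical

noncomputable section

open MvPolynomial

/-- `Covers λ γ` : γ ≺ λ, i.e. γ is obtained from λ by decreasing exactly one part by 1. -/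
def Covers (lam gam : YoungDiagram) : Prop :=
  ∃ i, gam.rowLen i + 1 = lam.rowLen i ∧ ∀ j, j ≠ i → gam.rowLen j = lam.rowLen j

/-- `cCoeff λ γ` : for `γ ≺ λ` obtained by decreasing a part of λ equal to `l`,
this is the number of parts of λ equal to `l`. -/
noncomputable def cCoeff (lam gam : YoungDiagram) : ℕ :=
  Set.ncard {j | ∃ i, gam.rowLen i + 1 = lam.rowLen i ∧ lam.rowLen j = lam.rowLen i}

/-- Partial sums of the row lengths of a Young diagram. -/
def rowPartialSum (lam : YoungDiagram) (i : ℕ) : ℕ :=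
  ∑ j ∈ Finset.range i, lam.rowLen j

/-- The (0-indexed) row of the canonical tableau of shape `lam` containing the entry `m`
(the entries `0,…,n-1` fill the cells consecutively row by row). -/
def rowIndex (lam : YoungDiagram) (m : ℕ) : ℕ :=
  ((Finset.range (m + 1)).filter fun i => rowPartialSum lam (i + 1) ≤ m).card

/-- The Young subgroup `H(λ) ≤ S_n`: permutations preserving each row of the canonical
tableau of shape `λ`. -/
def youngH (n : ℕ) (lam : YoungDiagram) : Subgroup (Equiv.Perm (Fin n)) where
  carrier := {g | ∀ m : Fin n, rowIndex lam (g m) = rowIndex lam m}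
  one_mem' := by intro m; simp
  mul_mem' := by
    intro a b ha hb m
    have h1 := ha (b m)
    have h2 := hb m
    simpa [Equiv.Perm.mul_apply] using h1.trans h2
  inv_mem' := by
    intro a ha m
    simpa using (ha (a⁻¹ m)).symm

/-- The character of the representation induced from the trivial representation of a
subgroup `H`:  `φ(g) = (1/|H|) · #{x : x⁻¹ g x ∈ H}`. -/
noncomputable def indTrivChar {G : Type*} [Group G] (H : Subgroup G) (g : G) : ℂ :=
  (Nat.card H : ℂ)⁻¹ * (Nat.card {x : G // x⁻¹ * g * x ∈ H} : ℂ)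


def Good {n : ℕ} (μ : ℕ → ℕ) (g : Equiv.Perm (Fin n)) (c : Fin n → ℕ) : Prop :=
  (∀ m, c (g m) = c m) ∧ ∀ i, (Finset.univ.filter fun m => c m = i).card = μ i

def fc {n : ℕ} (μ : ℕ → ℕ) (g : Equiv.Perm (Fin n)) : ℕ := Nat.card {c : Fin n → ℕ // Good μ g c}

lemma exists_perm {n : ℕ} (f c : Fin n → ℕ)
    (h : ∀ i, (Finset.univ.filter fun m => f m = i).card
      = (Finset.univ.filter fun m => c m = i).card) :
    ∃ y : Equiv.Perm (Fin n), ∀ m, c (y m) = f m := by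
  have e : ∀ i, Nonempty ({a // f a = i} ≃ {b // c b = i}) := by
    intro i
    refine ⟨Fintype.equivOfCardEq ?_⟩
    rw [Fintype.card_subtype, Fintype.card_subtype]
    exact h i
  exact ⟨Equiv.ofFiberEquiv fun i => (e i).some, fun m => Equiv.ofFiberEquiv_map _ m⟩

instance good_finite {n : ℕ} (μ : ℕ → ℕ) (g : Equiv.Perm (Fin n)) :
    Finite {c : Fin n → ℕ // Good μ g c} := by
  rcases isEmpty_or_nonempty {c : Fin n → ℕ // Good μ g c} with h | ⟨⟨f, hf⟩⟩
  · infer_instance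
  · have : ∀ c : {c : Fin n → ℕ // Good μ g c}, ∃ y : Equiv.Perm (Fin n), ∀ m, c.1 (y m) = f m :=
      fun c => exists_perm f c.1 fun i => by rw [hf.2, c.2.2]
    choose Y hY using this
    refine Finite.of_injective Y fun a b hab => ?_
    apply Subtype.ext
    funext m
    have h1 := hY a ((Y a).symm m)
    have h2 := hY b ((Y b).symm m)
    rw [← hab] at h2
    simp only [Equiv.apply_symm_apply] at h1 h2
    rw [h1, h2]

lemma card_conj {n : ℕ} (lam : YoungDiagram) (μ : ℕ → ℕ)
    (hμ : ∀ i, (Finset.univ.filter fun m : Fin n => rowIndex lam m = i).card = μ i)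
    (g : Equiv.Perm (Fin n)) :
    Nat.card {x : Equiv.Perm (Fin n) // x⁻¹ * g * x ∈ youngH n lam}
      = Nat.card (youngH n lam) * fc μ g := by
  have : ∀ c : {c : Fin n → ℕ // Good μ g c}, ∃ y : Equiv.Perm (Fin n),
      ∀ m, c.1 (y m) = rowIndex lam m :=
    fun c => exists_perm (fun m : Fin n => rowIndex lam m) c.1 fun i => by rw [hμ, c.2.2]
  choose Y hY using this
  have hY' : ∀ c m, rowIndex lam ((Y c)⁻¹ m : Fin n) = c.1 m := by
    intro c m
    rw [← hY c]; simp
  unfold fc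
  rw [← Nat.card_prod]
  symm
  refine Nat.card_congr (Equiv.ofBijective
    (fun p => ⟨Y p.2 * p.1.1, ?_⟩) ⟨?_, ?_⟩)
  · intro m
    have h1 : ∀ m, rowIndex lam (p.1.1⁻¹ m : Fin n) = rowIndex lam m := (youngH n lam).inv_mem p.1.2
    have h2 : ∀ m, rowIndex lam (p.1.1 m) = rowIndex lam m := p.1.2
    simp only [mul_inv_rev, Equiv.Perm.mul_apply]
    rw [h1, hY', p.2.2.1, hY, h2]
  · rintro ⟨h, c⟩ ⟨h', c'⟩ hh
    have hh : Y c * h.1 = Y c' * h'.1 := congrArg Subtype.val hh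
    have hc : c = c' := by
      apply Subtype.ext
      funext m
      have h1 : ∀ m, rowIndex lam (h.1⁻¹ m : Fin n) = rowIndex lam m := (youngH n lam).inv_mem h.2
      have h2 : ∀ m, rowIndex lam (h'.1⁻¹ m : Fin n) = rowIndex lam m := (youngH n lam).inv_mem h'.2
      have := congrArg (fun x : Equiv.Perm (Fin n) => rowIndex lam (x⁻¹ m : Fin n)) hh
      simp only [mul_inv_rev, Equiv.Perm.mul_apply] at this
      rw [h1, h2, hY', hY'] at this
      exact this
    subst hc
    have := mul_left_cancel hh
    rw [Subtype.ext this]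
  · rintro ⟨x, hx⟩
    have hx' : ∀ m, rowIndex lam ((x⁻¹ * g * x) m) = rowIndex lam m := hx
    let c : {c : Fin n → ℕ // Good μ g c} := ⟨fun m => rowIndex lam (x⁻¹ m : Fin n), by
      constructor
      · intro m
        have := hx' (x⁻¹ m)
        simpa [Equiv.Perm.mul_apply] using this
      · intro i
        rw [← hμ i]
        refine Finset.card_bij (fun m _ => x⁻¹ m) ?_ ?_ ?_
        · simp
        · simp
        · intro b hb
          exact ⟨x b, by simpa using hb, by simp⟩⟩
    refine ⟨⟨⟨(Y c)⁻¹ * x, ?_⟩, c⟩, ?_⟩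
    · intro m
      simp only [Equiv.Perm.mul_apply]
      rw [hY']
      simp [c]
    · apply Subtype.ext
      simp

lemma ind_eq_fc {n : ℕ} (lam : YoungDiagram) (μ : ℕ → ℕ)
    (hμ : ∀ i, (Finset.univ.filter fun m : Fin n => rowIndex lam m = i).card = μ i)
    (g : Equiv.Perm (Fin n)) : indTrivChar (youngH n lam) g = (fc μ g : ℂ) := by
  unfold indTrivChar
  rw [card_conj lam μ hμ g]
  have : (Nat.card (youngH n lam) : ℂ) ≠ 0 := by
    exact_mod_cast Nat.card_pos.ne'
  push_cast
  field_simp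

lemma fc_perm {n : ℕ} (μ : ℕ → ℕ) (g : Equiv.Perm (Fin n)) (s : Equiv.Perm ℕ) :
    fc (fun i => μ (s i)) g = fc μ g := by
  unfold fc
  refine Nat.card_congr (Equiv.subtypeEquiv (Equiv.arrowCongr (Equiv.refl _) s) ?_)
  intro c
  unfold Good
  refine and_congr ?_ ?_
  · simp
  · constructor
    · intro h i
      have := h (s.symm i)
      simp only [Equiv.apply_symm_apply] at this
      rw [← this]
      simp [Equiv.eq_symm_apply]
    · intro h i
      have := h (s i)
      change _ = μ (s i)
      rw [← this]
      simp

lemma rps_mono (lam : YoungDiagram) : Monotone (rowPartialSum lam) := by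
  apply monotone_nat_of_le_succ
  intro i
  simp [rowPartialSum, Finset.sum_range_succ]

lemma rowLen_pos_iff (lam : YoungDiagram) (i : ℕ) : 0 < lam.rowLen i ↔ i < lam.colLen 0 := by
  rw [← YoungDiagram.mem_iff_lt_rowLen, YoungDiagram.mem_iff_lt_colLen]

lemma rps_total (lam : YoungDiagram) : rowPartialSum lam (lam.colLen 0) = lam.card := by
  unfold rowPartialSum YoungDiagram.card
  rw [Finset.card_eq_sum_card_fiberwise (f := Prod.fst) (t := Finset.range (lam.colLen 0))]
  · refine Finset.sum_congr rfl fun i _ => ?_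
    rw [YoungDiagram.rowLen_eq_card]; rfl
  · rintro ⟨a, b⟩ h
    have h : (a, b) ∈ lam := h
    simp only [Finset.coe_range, Set.mem_Iio]
    rw [← YoungDiagram.mem_iff_lt_colLen]
    exact lam.up_left_mem le_rfl (Nat.zero_le _) h

lemma rps_le (lam : YoungDiagram) (i : ℕ) : rowPartialSum lam i ≤ lam.card := by
  rw [← rps_total]
  rcases le_total i (lam.colLen 0) with h | h
  · exact rps_mono lam h
  · unfold rowPartialSum
    apply le_of_eq
    symm
    apply Finset.sum_subset
    · simpa using h
    · intro x _ hx
      have := rowLen_pos_iff lam x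
      simp at hx
      omega

lemma le_rps (lam : YoungDiagram) (i : ℕ) (h : i ≤ lam.colLen 0) : i ≤ rowPartialSum lam i := by
  unfold rowPartialSum
  calc i = ∑ j ∈ Finset.range i, 1 := by simp
    _ ≤ _ := Finset.sum_le_sum fun j hj => by
      have := rowLen_pos_iff lam j
      simp at hj
      omega

lemma rowIndex_eq (lam : YoungDiagram) (m r : ℕ) (h1 : rowPartialSum lam r ≤ m)
    (h2 : m < rowPartialSum lam (r + 1)) : rowIndex lam m = r := by
  have hr : r ≤ lam.colLen 0 := by
    have : 0 < lam.rowLen r := by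
      simp [rowPartialSum, Finset.sum_range_succ] at h1 h2
      omega
    exact ((rowLen_pos_iff _ _).1 this).le
  have h3 := le_rps lam r hr
  have : ((Finset.range (m + 1)).filter fun i => rowPartialSum lam (i + 1) ≤ m)
      = Finset.range r := by
    ext i
    simp only [Finset.mem_filter, Finset.mem_range]
    constructor
    · rintro ⟨_, h⟩
      by_contra hh
      have := rps_mono lam (show r + 1 ≤ i + 1 by omega)
      omega
    · intro h
      have := rps_mono lam (show i + 1 ≤ r by omega)
      omega
  rw [rowIndex, this, Finset.card_range]

lemma rowIndex_exists (lam : YoungDiagram) (m : ℕ) (hm : m < lam.card) :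
    ∃ r, rowPartialSum lam r ≤ m ∧ m < rowPartialSum lam (r + 1) := by
  have hex : ∃ r, m < rowPartialSum lam r := ⟨_, by rw [rps_total]; exact hm⟩
  have h0 : Nat.find hex ≠ 0 := by
    intro h
    have := Nat.find_spec hex
    rw [h] at this
    simp [rowPartialSum] at this
  obtain ⟨r, hr⟩ := Nat.exists_eq_succ_of_ne_zero h0
  refine ⟨r, ?_, ?_⟩
  · have := Nat.find_min hex (m := r) (by omega)
    omega
  · have := Nat.find_spec hex
    rwa [hr] at this

lemma fiber_card {n : ℕ} (lam : YoungDiagram) (h : lam.card = n) (i : ℕ) :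
    (Finset.univ.filter fun m : Fin n => rowIndex lam m = i).card = lam.rowLen i := by
  have : (Finset.univ.filter fun m : Fin n => rowIndex lam m = i).map Fin.valEmbedding
      = Finset.Ico (rowPartialSum lam i) (rowPartialSum lam (i + 1)) := by
    ext m
    simp only [Finset.mem_map, Finset.mem_filter, Finset.mem_univ, true_and, Finset.mem_Ico,
      Fin.valEmbedding_apply]
    constructor
    · rintro ⟨a, ha, rfl⟩
      obtain ⟨r, h1, h2⟩ := rowIndex_exists lam a (by rw [h]; exact a.2)
      have := rowIndex_eq lam a r h1 h2
      rw [ha] at this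
      subst this
      exact ⟨h1, h2⟩
    · rintro ⟨h1, h2⟩
      refine ⟨⟨m, ?_⟩, rowIndex_eq lam m i h1 h2, rfl⟩
      have := rps_le lam (i + 1)
      omega
  rw [← Finset.card_map Fin.valEmbedding, this]
  simp [rowPartialSum, Finset.sum_range_succ]

def dec (μ : ℕ → ℕ) (j i : ℕ) : ℕ := if i = j then μ i - 1 else μ i

lemma card_snoc {k : ℕ} (c : Fin (k + 1) → ℕ) (i : ℕ) :
    (Finset.univ.filter fun m => c m = i).card =
      (Finset.univ.filter fun m : Fin k => c m.castSucc = i).card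
        + if c (Fin.last k) = i then 1 else 0 := by
  simp only [Finset.card_filter]
  rw [Fin.sum_univ_castSucc]

lemma good_succ {k : ℕ} (μ : ℕ → ℕ) (g : Equiv.Perm (Fin k)) (G : Equiv.Perm (Fin (k + 1)))
    (hG : ∀ m : Fin k, G m.castSucc = (g m).castSucc) (hl : G (Fin.last k) = Fin.last k)
    (c : Fin (k + 1) → ℕ) :
    Good μ G c ↔ 0 < μ (c (Fin.last k)) ∧
      Good (dec μ (c (Fin.last k))) g (fun m => c m.castSucc) := by
  unfold Good
  rw [Fin.forall_fin_succ']
  simp only [hG, hl, card_snoc, and_true, dec]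
  constructor
  · rintro ⟨h1, h2⟩
    refine ⟨?_, h1, ?_⟩
    · have := h2 (c (Fin.last k))
      simp at this
      omega
    · intro i
      rw [← h2 i]
      by_cases h : i = c (Fin.last k)
      · subst h; simp
      · have h' : ¬ c (Fin.last k) = i := fun e => h e.symm
        simp [h, h']
  · rintro ⟨h0, h1, h2⟩
    refine ⟨h1, ?_⟩
    intro i
    rw [h2 i]
    by_cases h : i = c (Fin.last k)
    · subst h; simp; omega
    · have h' : ¬ c (Fin.last k) = i := fun e => h e.symm
      simp [h, h']

lemma fc_succ {k : ℕ} (μ : ℕ → ℕ) (g : Equiv.Perm (Fin k)) (G : Equiv.Perm (Fin (k + 1)))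
    (hG : ∀ m : Fin k, G m.castSucc = (g m).castSucc) (hl : G (Fin.last k) = Fin.last k)
    (N : ℕ) (hN : ∀ i, 0 < μ i ↔ i < N) :
    fc μ G = ∑ j ∈ Finset.range N, fc (dec μ j) g := by
  rw [← Fin.sum_univ_eq_sum_range (fun j => fc (dec μ j) g) N]
  unfold fc
  rw [← Nat.card_sigma]
  refine Nat.card_congr (Equiv.ofBijective (fun c => ⟨⟨c.1 (Fin.last k), ?_⟩,
    ⟨fun m => c.1 m.castSucc, ?_⟩⟩) ⟨?_, ?_⟩)
  · exact (hN _).1 ((good_succ μ g G hG hl c.1).1 c.2).1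
  · exact ((good_succ μ g G hG hl c.1).1 c.2).2
  · rintro ⟨c, hc⟩ ⟨d, hd⟩ h
    simp only [Sigma.mk.injEq, Fin.mk.injEq] at h
    obtain ⟨h1, h2⟩ := h
    have h3 : (fun m : Fin k => c m.castSucc) = fun m => d m.castSucc := by
      rw [Subtype.heq_iff_coe_eq] at h2
      · exact h2
      · intro x; simp only [h1]
    apply Subtype.ext
    funext m
    refine Fin.lastCases h1 (fun m => congrFun h3 m) m
  · rintro ⟨⟨j, hj⟩, ⟨c, hc⟩⟩
    refine ⟨⟨Fin.snoc (α := fun _ => ℕ) c j, ?_⟩, ?_⟩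
    · rw [good_succ μ g G hG hl]
      simp only [Fin.snoc_last, Fin.snoc_castSucc]
      exact ⟨(hN j).2 hj, hc⟩
    · simp only [Sigma.mk.injEq, Fin.mk.injEq, Fin.snoc_last, true_and]
      rw [Subtype.heq_iff_coe_eq]
      · simp
      · intro x; simp

lemma yd_ext {a b : YoungDiagram} (h : ∀ i, a.rowLen i = b.rowLen i) : a = b := by
  apply YoungDiagram.ext
  ext ⟨i, j⟩
  rw [YoungDiagram.mem_cells, YoungDiagram.mem_cells, YoungDiagram.mem_iff_lt_rowLen,
    YoungDiagram.mem_iff_lt_rowLen, h]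

/-- last row of the same length as row `j` -/
def lastRow (lam : YoungDiagram) (j : ℕ) : ℕ := lam.colLen (lam.rowLen j - 1) - 1

lemma lastRow_spec (lam : YoungDiagram) (j : ℕ) (hj : 0 < lam.rowLen j) :
    lam.rowLen (lastRow lam j) = lam.rowLen j ∧
      ∀ i, lastRow lam j < i → lam.rowLen i < lam.rowLen j := by
  have key : ∀ i, lam.rowLen j - 1 < lam.rowLen i ↔ i < lam.colLen (lam.rowLen j - 1) := by
    intro i
    rw [← YoungDiagram.mem_iff_lt_rowLen, YoungDiagram.mem_iff_lt_colLen]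
  have h1 := (key j).1 (by omega)
  have h2 := (key (lastRow lam j)).2 (by unfold lastRow; omega)
  have h3 := lam.rowLen_anti j (lastRow lam j) (by unfold lastRow; omega)
  refine ⟨by omega, fun i hi => ?_⟩
  have h4 := (key i).not.2 (by unfold lastRow at hi; omega)
  omega

def gam (lam : YoungDiagram) (j : ℕ) : YoungDiagram :=
  if hj : 0 < lam.rowLen j then
  { cells := lam.cells.erase (lastRow lam j, lam.rowLen j - 1)
    isLowerSet := by
      rintro ⟨a, b⟩ ⟨a', b'⟩ hle h
      obtain ⟨h1, h2⟩ : a' ≤ a ∧ b' ≤ b := hle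
      simp only [Finset.coe_erase, Set.mem_diff, Finset.mem_coe, YoungDiagram.mem_cells,
        Set.mem_singleton_iff, Prod.mk.injEq] at h ⊢
      refine ⟨lam.up_left_mem h1 h2 h.1, ?_⟩
      rintro ⟨rfl, rfl⟩
      obtain ⟨h3, h4⟩ := h
      rw [YoungDiagram.mem_iff_lt_rowLen] at h3
      obtain ⟨h5, h6⟩ := lastRow_spec lam j hj
      rcases h1.lt_or_eq with h | h
      · have := h6 a h
        omega
      · subst h
        apply h4
        omega }
  else ⊥

lemma gam_cells (lam : YoungDiagram) (j : ℕ) (hj : 0 < lam.rowLen j) :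
    (gam lam j).cells = lam.cells.erase (lastRow lam j, lam.rowLen j - 1) := by
  simp [gam, hj]

lemma corner_mem (lam : YoungDiagram) (j : ℕ) (hj : 0 < lam.rowLen j) :
    (lastRow lam j, lam.rowLen j - 1) ∈ lam.cells := by
  rw [YoungDiagram.mem_cells, YoungDiagram.mem_iff_lt_rowLen, (lastRow_spec lam j hj).1]
  omega

lemma gam_card (lam : YoungDiagram) (j : ℕ) (hj : 0 < lam.rowLen j) :
    (gam lam j).card = lam.card - 1 := by
  unfold YoungDiagram.card
  rw [gam_cells lam j hj, Finset.card_erase_of_mem (corner_mem lam j hj)]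

lemma gam_rowLen (lam : YoungDiagram) (j : ℕ) (hj : 0 < lam.rowLen j) (i : ℕ) :
    (gam lam j).rowLen i = dec lam.rowLen (lastRow lam j) i := by
  apply eq_of_forall_lt_iff
  intro b
  rw [← YoungDiagram.mem_iff_lt_rowLen, ← YoungDiagram.mem_cells, gam_cells lam j hj,
    Finset.mem_erase, YoungDiagram.mem_cells, YoungDiagram.mem_iff_lt_rowLen]
  have := (lastRow_spec lam j hj).1
  unfold dec
  by_cases h : i = lastRow lam j
  · subst h
    simp
    omega
  · simp [h]

lemma gam_eq_iff (lam : YoungDiagram) (i j : ℕ) (hi : 0 < lam.rowLen i) (hj : 0 < lam.rowLen j) :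
    gam lam i = gam lam j ↔ lam.rowLen i = lam.rowLen j := by
  constructor
  · intro h
    have h1 := congrArg YoungDiagram.cells h
    rw [gam_cells lam i hi, gam_cells lam j hj] at h1
    have := Finset.erase_injOn lam.cells (corner_mem lam i hi) (corner_mem lam j hj) h1
    simp only [Prod.mk.injEq] at this
    omega
  · intro h
    have : lastRow lam i = lastRow lam j := by unfold lastRow; rw [h]
    apply YoungDiagram.ext
    rw [gam_cells lam i hi, gam_cells lam j hj, h, this]

lemma covers_gam (lam : YoungDiagram) (j : ℕ) (hj : 0 < lam.rowLen j) : Covers lam (gam lam j) := by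
  have := (lastRow_spec lam j hj).1
  refine ⟨lastRow lam j, ?_, ?_⟩
  · rw [gam_rowLen lam j hj]; simp [dec]; omega
  · intro i hi
    rw [gam_rowLen lam j hj]; simp [dec, hi]

lemma covers_eq (lam ga : YoungDiagram) (h : Covers lam ga) :
    ∃ j, 0 < lam.rowLen j ∧ gam lam j = ga := by
  obtain ⟨i, h1, h2⟩ := h
  have hi : 0 < lam.rowLen i := by omega
  refine ⟨i, hi, ?_⟩
  have hl : lastRow lam i = i := by
    obtain ⟨h3, h4⟩ := lastRow_spec lam i hi
    rcases lt_trichotomy (lastRow lam i) i with h | h | h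
    · have := h4 i h; omega
    · exact h
    · have h5 := h2 _ h.ne'
      have := ga.rowLen_anti i _ h.le
      omega
  apply yd_ext
  intro r
  rw [gam_rowLen lam i hi, hl]
  unfold dec
  split_ifs with h
  · subst h; omega
  · rw [h2 r h]

lemma cCoeff_gam (lam : YoungDiagram) (j : ℕ) (hj : 0 < lam.rowLen j) :
    cCoeff lam (gam lam j) =
      ((Finset.range (lam.colLen 0)).filter fun i => gam lam i = gam lam j).card := by
  unfold cCoeff
  rw [← Set.ncard_coe_finset]
  congr 1
  ext r
  have hs := (lastRow_spec lam j hj).1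
  simp only [Set.mem_setOf_eq, Finset.coe_filter, Finset.mem_range, ← rowLen_pos_iff]
  constructor
  · rintro ⟨i, h1, h2⟩
    rw [gam_rowLen lam j hj] at h1
    unfold dec at h1
    split_ifs at h1 with h
    · have h0 : 0 < lam.rowLen r := by omega
      refine ⟨h0, (gam_eq_iff lam r j h0 hj).2 ?_⟩
      rw [h2, h, hs]
    · omega
  · rintro ⟨h0, h1⟩
    rw [gam_eq_iff lam r j h0 hj] at h1
    refine ⟨lastRow lam j, ?_, by omega⟩
    rw [gam_rowLen lam j hj]
    simp [dec]; omega

lemma fc_dec_swap {n : ℕ} (μ : ℕ → ℕ) (g : Equiv.Perm (Fin n)) (a b : ℕ) (h : μ a = μ b) :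
    fc (dec μ a) g = fc (dec μ b) g := by
  rw [← fc_perm (dec μ b) g (Equiv.swap a b)]
  congr 1
  funext i
  unfold dec
  by_cases h1 : i = a
  · subst h1; simp [h]
  · by_cases h2 : i = b
    · subst h2
      simp only [Equiv.swap_apply_right, h1, if_false]
      by_cases h3 : a = i
      · exact absurd h3.symm h1
      · simp [h3, h]
    · simp [Equiv.swap_apply_of_ne_of_ne h1 h2, h1, h2]

/-- The restriction to `S_{n-1}` of the representation of `S_n` induced from the identity
representation of the Young subgroup `H(λ)` decomposes, over the diagrams `γ ≺ λ`, as the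
sum of `c(λ,γ)` copies of the representation induced from the identity representation of
`H(γ)`; on the level of characters:
`φ_λ(ι g) = Σ_{γ ≺ λ} c(λ,γ) · φ_γ(g)` where `ι : S_{n-1} → S_n` fixes the last element. -/
theorem restrict_ind_young (n : ℕ) (hn : 1 ≤ n) (lam : YoungDiagram) (hlam : lam.card = n)
    (g : Equiv.Perm (Fin (n - 1))) :
    indTrivChar (youngH n lam)
        (g.viaFintypeEmbedding (Fin.castLEEmb (Nat.sub_le n 1))) =
      ∑ᶠ (ga : YoungDiagram) (_ : ga.card = n - 1 ∧ Covers lam ga),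
        (cCoeff lam ga : ℂ) * indTrivChar (youngH (n - 1) ga) g := by
  obtain ⟨k, rfl⟩ : ∃ k, n = k + 1 := ⟨n - 1, by omega⟩
  change Equiv.Perm (Fin k) at g
  rw [ind_eq_fc lam lam.rowLen (fiber_card lam hlam)]
  rw [fc_succ lam.rowLen g _ ?_ ?_ (lam.colLen 0) (rowLen_pos_iff lam)]
  · have hset : ∀ ga : YoungDiagram, (ga.card = k + 1 - 1 ∧ Covers lam ga) ↔
        ga ∈ (Finset.range (lam.colLen 0)).image (gam lam) := by
      intro ga
      simp only [Finset.mem_image, Finset.mem_range, ← rowLen_pos_iff]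
      constructor
      · rintro ⟨_, h⟩
        exact covers_eq lam ga h
      · rintro ⟨j, hj, rfl⟩
        exact ⟨by rw [gam_card lam j hj, hlam], covers_gam lam j hj⟩
    simp_rw [hset]
    rw [finsum_mem_finset_eq_sum]
    push_cast
    symm
    apply Finset.sum_image'
    intro j hj
    have hj' : 0 < lam.rowLen j := (rowLen_pos_iff _ _).2 (by simpa using hj)
    rw [cCoeff_gam lam j hj', ← nsmul_eq_mul]
    symm
    apply Finset.sum_eq_card_nsmul
    intro i hi
    simp only [Finset.mem_filter, Finset.mem_range, ← rowLen_pos_iff] at hi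
    have hc : (gam lam j).card = k := by rw [gam_card lam j hj', hlam]; rfl
    have e : (gam lam j).rowLen = dec lam.rowLen (lastRow lam j) :=
      funext (gam_rowLen lam j hj')
    have hE := ind_eq_fc (gam lam j) (gam lam j).rowLen (fiber_card (n := k) (gam lam j) hc) g
    refine Eq.trans ?_ hE.symm
    rw [e, fc_dec_swap lam.rowLen g i (lastRow lam j)]
    rw [(lastRow_spec lam j hj').1]
    exact (gam_eq_iff lam i j hi.1 hj').1 hi.2
  · intro m
    exact Equiv.Perm.viaFintypeEmbedding_apply_image (e := g)
      (f := Fin.castLEEmb (Nat.sub_le (k + 1) 1)) m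
  · apply Equiv.Perm.viaFintypeEmbedding_apply_notMem_range
    rintro ⟨m, hm⟩
    have h1 := congrArg Fin.val hm
    have h2 := m.2
    simp at h1
    omega


end
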